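/- Let K > 0 and N ∈ (1,∞). Then λ[h_{K,N,D_{K,N}}] = (N/(N−1))·K; equivalently, the Poincaré constant of the density x ↦ sin(√(K/(N−1))·x)^{N−1} on [0, π/√(K/(N−1))] equals (N/(N−1))·K. -/

import Mathlib

open MeasureTheory Filter

/-- The function `s_κ` from the paper. -/
noncomputable def sKappa (κ θ : ℝ) : ℝ :=
  if 0 < κ then Real.sin (Real.sqrt κ * θ) / Real.sqrt κ
  else if κ < 0 then Real.sinh (Real.sqrt (-κ) * θ) / Real.sqrt (-κ)
  else θ

/-- The support of the measure `h · 𝓛¹`. -/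
noncomputable def measSupport (h : ℝ → ℝ) : Set ℝ :=
  {x : ℝ | ∀ ε > 0,
    0 < (MeasureTheory.volume.withDensity (fun y => ENNReal.ofReal (h y))) (Metric.ball x ε)}

/-- A one-dimensional `MCP(K,N)` density. -/
def IsMCPDensity (K N : ℝ) (h : ℝ → ℝ) : Prop :=
  (∀ x, 0 ≤ h x) ∧ MeasureTheory.LocallyIntegrable h MeasureTheory.volume ∧
  ∀ x₀ ∈ measSupport h, ∀ x₁ ∈ measSupport h,
    (0 < K → x₀ ≠ x₁ → |x₁ - x₀| < Real.pi / Real.sqrt (K / (N - 1))) ∧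
    ∀ t ∈ Set.Icc (0:ℝ) 1,
      (sKappa (K / (N - 1)) ((1 - t) * |x₁ - x₀|) / sKappa (K / (N - 1)) |x₁ - x₀|) ^ (N - 1)
          * h x₀
        ≤ h (t * x₁ + (1 - t) * x₀)

/-- The model density `h_{K,N,D}`. -/
noncomputable def modelDensity (K N D : ℝ) (x : ℝ) : ℝ :=
  if x ∈ Set.Icc 0 (D / 2) then sKappa (K / (N - 1)) (D - x) ^ (N - 1)
  else if x ∈ Set.Icc (D / 2) D then sKappa (K / (N - 1)) x ^ (N - 1)
  else 0

/-- Locally Lipschitz functions on a subset `I` of the reals. -/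
def LocLipschitzOn (f : ℝ → ℝ) (I : Set ℝ) : Prop :=
  ∀ x ∈ I, ∃ ε > 0, ∃ C : NNReal, LipschitzOnWith C f (I ∩ Metric.ball x ε)

/-- The local Lipschitz slope `|∇f|(x)` relative to `I`. -/
noncomputable def slopeOn (f : ℝ → ℝ) (I : Set ℝ) (x : ℝ) : ℝ :=
  Filter.limsup (fun y => |f y - f x| / |y - x|) (nhdsWithin x (I \ {x}))

/-- The Poincaré constant `λ[h, I]` of the density `h` on `I`. -/
noncomputable def poincareConst (h : ℝ → ℝ) (I : Set ℝ) : ℝ :=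
  sInf { r : ℝ | ∃ f : ℝ → ℝ, LocLipschitzOn f I ∧
    (∫ x in I, f x * h x) = 0 ∧
    (0 < ∫ x in I, (f x) ^ 2 * h x) ∧
    MeasureTheory.IntegrableOn (fun x => (f x) ^ 2 * h x) I ∧
    r = (∫ x in I, (slopeOn f I x) ^ 2 * h x) / (∫ x in I, (f x) ^ 2 * h x) }

section Poincare

open MeasureTheory Set Topology NNReal

theorem lipschitzOnWith_mul_self_mul {r c g : ℝ → ℝ} {S : Set ℝ} {C L : ℝ≥0} {M : ℝ}
    (hg : LipschitzOnWith C g S) (hc : LipschitzOnWith L c S) (hM : ∀ x ∈ S, |r x| ≤ M)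
    (hr : ∀ x ∈ S, g x = r x * c x) :
    ∃ A, LipschitzOnWith A (fun x => r x * g x) S := by
  rcases S.eq_empty_or_nonempty with rfl | ⟨x₀, hx₀⟩
  · exact ⟨0, by simp⟩
  have hM0 : 0 ≤ M := (abs_nonneg _).trans (hM x₀ hx₀)
  refine ⟨((M + M) * C + M * M * L).toNNReal, LipschitzOnWith.of_dist_le_mul ?_⟩
  intro x hx y hy
  have h1 := hg.dist_le_mul x hx y hy
  have h2 := hc.dist_le_mul x hx y hy
  rw [Real.dist_eq] at h1 h2 ⊢
  have e : r x * g x - r y * g y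
      = (r x + r y) * (g x - g y) + r x * r y * (-(c x - c y)) := by
    rw [hr x hx, hr y hy]; ring
  have hs : |r x + r y| ≤ M + M := (abs_add_le _ _).trans (add_le_add (hM x hx) (hM y hy))
  have hp : |r x * r y| ≤ M * M := by
    rw [abs_mul]; exact mul_le_mul (hM x hx) (hM y hy) (abs_nonneg _) hM0
  rw [e]
  calc _ ≤ |r x + r y| * |g x - g y| + |r x * r y| * |c x - c y| := by
        refine (abs_add_le _ _).trans ?_
        rw [abs_mul, abs_mul (r x * r y), abs_neg]
    _ ≤ (M + M) * (C * dist x y) + M * M * (L * dist x y) := by gcongr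
    _ = _ := by
        rw [Real.coe_toNNReal _ (by positivity)]; ring

theorem abs_le_mul_abs_cos {s : ℝ} (hs : 0 < s) {g : ℝ → ℝ} {C : ℝ≥0}
    (hg : LipschitzOnWith C g (Icc 0 (Real.pi / s))) (h0 : g (Real.pi / s / 2) = 0)
    {x : ℝ} (hx : x ∈ Icc 0 (Real.pi / s)) :
    |g x| ≤ C * Real.pi / (2 * s) * |Real.cos (s * x)| := by
  have hpi := Real.pi_pos
  have hm : Real.pi / s / 2 ∈ Icc 0 (Real.pi / s) := ⟨by positivity, by
    have : 0 < Real.pi / s := by positivity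
    linarith⟩
  have h1 := hg.dist_le_mul x hx _ hm
  rw [Real.dist_eq, Real.dist_eq, h0, sub_zero] at h1
  have hsx : s * x ≤ Real.pi := by
    have := hx.2; rw [le_div_iff₀ hs] at this; linarith
  have hsx0 : 0 ≤ s * x := mul_nonneg hs.le hx.1
  have h2 : 2 / Real.pi * |Real.pi / 2 - s * x| ≤ |Real.sin (Real.pi / 2 - s * x)| :=
    Real.mul_abs_le_abs_sin (abs_le.2 ⟨by linarith, by linarith⟩)
  rw [Real.sin_pi_div_two_sub] at h2
  have e : |x - Real.pi / s / 2| = |Real.pi / 2 - s * x| / s := by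
    rw [eq_div_iff hs.ne', ← abs_of_pos hs, ← abs_mul, abs_of_pos hs, abs_sub_comm]
    congr 1; field_simp
  calc |g x| ≤ C * |x - Real.pi / s / 2| := h1
    _ = C * Real.pi / (2 * s) * (2 / Real.pi * |Real.pi / 2 - s * x|) := by rw [e]; field_simp
    _ ≤ _ := by gcongr

theorem ae_uIoc_mem_Ioo {a b : ℝ} (hab : a ≤ b) : ∀ᵐ x : ℝ, x ∈ uIoc a b → x ∈ Ioo a b := by
  filter_upwards [(measure_eq_zero_iff_ae_notMem.1 (Real.volume_singleton (a := b)))] with x hx h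
  rw [uIoc_of_le hab] at h
  exact ⟨h.1, lt_of_le_of_ne h.2 hx⟩

theorem intervalIntegrable_sq_deriv_mul {g w : ℝ → ℝ} {C : ℝ≥0} {a b : ℝ} (hab : a ≤ b)
    (hg : LipschitzOnWith C g (Icc a b)) (hw : Continuous w) :
    IntervalIntegrable (fun x => deriv g x ^ 2 * w x) volume a b := by
  have hac : AbsolutelyContinuousOnInterval g a b :=
    LipschitzOnWith.absolutelyContinuousOnInterval (by rwa [uIcc_of_le hab])
  refine IntervalIntegrable.mul_continuousOn ?_ hw.continuousOn
  have hd := hac.intervalIntegrable_deriv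
  rw [intervalIntegrable_iff] at hd ⊢
  have : IntegrableOn (fun x => deriv g x * deriv g x) (uIoc a b) := by
    refine Integrable.bdd_mul (c := C) hd hd.aestronglyMeasurable ?_
    rw [ae_restrict_iff' measurableSet_uIoc]
    filter_upwards [ae_uIoc_mem_Ioo hab] with x hx h
    exact norm_deriv_le_of_lipschitzOn (Icc_mem_nhds (hx h).1 (hx h).2) hg
  simpa [sq] using this

theorem sin_mul_pos_of_mem_Ioo {s x : ℝ} (hs : 0 < s) (hx : x ∈ Ioo 0 (Real.pi / s)) :
    0 < Real.sin (s * x) := by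
  refine Real.sin_pos_of_pos_of_lt_pi (mul_pos hs hx.1) ?_
  have := hx.2
  rw [lt_div_iff₀ hs] at this; linarith

theorem continuous_sin_mul_rpow {n : ℝ} (s : ℝ) (hn : 1 < n) :
    Continuous fun x => Real.sin (s * x) ^ (n - 1) :=
  (by fun_prop : Continuous fun x => Real.sin (s * x)).rpow_const
    fun _ => Or.inr (by linarith)

theorem hasDerivAt_sin_mul_rpow {n : ℝ} (s x : ℝ) (hn : 1 < n) :
    HasDerivAt (fun x => Real.sin (s * x) ^ n)
      (n * s * Real.cos (s * x) * Real.sin (s * x) ^ (n - 1)) x := by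
  have h := (((hasDerivAt_id x).const_mul s).sin).rpow_const (p := n) (Or.inr hn.le)
  refine h.congr_deriv ?_
  simp only [id, mul_one]; ring

theorem absolutelyContinuous_sin_mul_rpow {n : ℝ} (s a b : ℝ) (hn : 1 < n) :
    AbsolutelyContinuousOnInterval (fun x => Real.sin (s * x) ^ n) a b := by
  have h : ContDiff ℝ 1 fun x => Real.sin (s * x) ^ n := by
    have := Real.contDiff_rpow_const_of_le (p := n) (n := 1) (by simpa using hn.le)
    exact this.comp (by fun_prop : ContDiff ℝ 1 fun x => Real.sin (s * x))
  obtain ⟨K, hK⟩ := (h.locallyLipschitz.locallyLipschitzOn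
    (s := uIcc a b)).exists_lipschitzOnWith_of_compact isCompact_uIcc
  exact hK.absolutelyContinuousOnInterval

theorem integral_sq_mul_le_of_midpoint_eq_zero {s n : ℝ} (hs : 0 < s) (hn : 1 < n) {g : ℝ → ℝ}
    {C : ℝ≥0} (hg : LipschitzOnWith C g (Icc 0 (Real.pi / s))) (h0 : g (Real.pi / s / 2) = 0) :
    n * s ^ 2 * ∫ x in 0..Real.pi / s, g x ^ 2 * Real.sin (s * x) ^ (n - 1)
      ≤ ∫ x in 0..Real.pi / s, deriv g x ^ 2 * Real.sin (s * x) ^ (n - 1) := by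
  have hpi := Real.pi_pos
  have hD : 0 ≤ Real.pi / s := by positivity
  set c : ℝ → ℝ := fun x => Real.cos (s * x) with hc
  set r : ℝ → ℝ := fun x => g x / c x with hr
  have hrg : ∀ x ∈ Icc 0 (Real.pi / s), g x = r x * c x := by
    intro x hx
    by_cases h : c x = 0
    · have := abs_le_mul_abs_cos hs hg h0 hx
      have h' : Real.cos (s * x) = 0 := h
      rw [h'] at this
      simp at this
      simp [h, this]
    · simp [hr, h]
  have hM : ∀ x ∈ Icc 0 (Real.pi / s), |r x| ≤ C * Real.pi / (2 * s) := by
    intro x hx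
    simp only [hr, abs_div]
    exact div_le_of_le_mul₀ (abs_nonneg _) (by positivity) (abs_le_mul_abs_cos hs hg h0 hx)
  have hcl : ContDiff ℝ 1 c := by simp only [hc]; fun_prop
  obtain ⟨L, hL⟩ := (hcl.locallyLipschitz.locallyLipschitzOn
    (s := Icc 0 (Real.pi / s))).exists_lipschitzOnWith_of_compact isCompact_Icc
  obtain ⟨A, hA⟩ := lipschitzOnWith_mul_self_mul hg hL hM hrg
  have hq : AbsolutelyContinuousOnInterval (fun x => r x * g x) 0 (Real.pi / s) :=
    LipschitzOnWith.absolutelyContinuousOnInterval (by rwa [uIcc_of_le hD])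
  have hG := hq.fun_mul (absolutelyContinuous_sin_mul_rpow s 0 (Real.pi / s) hn)
  have hInt := hG.integral_deriv_eq_sub
  have hn0 : n ≠ 0 := by linarith
  have e1 : s * (Real.pi / s) = Real.pi := by field_simp
  simp only [e1, Real.sin_pi, mul_zero, Real.sin_zero, Real.zero_rpow hn0, sub_self] at hInt
  have hw := continuous_sin_mul_rpow s hn
  have i1 := intervalIntegrable_sq_deriv_mul hD hg hw
  have i2 : IntervalIntegrable (fun x => g x ^ 2 * Real.sin (s * x) ^ (n - 1)) volume 0 (Real.pi / s) := by
    refine ContinuousOn.intervalIntegrable ?_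
    rw [uIcc_of_le hD]
    exact (hg.continuousOn.pow 2).mul hw.continuousOn
  have i3 := hG.intervalIntegrable_deriv
  have hne : ∀ᵐ x : ℝ, x ≠ Real.pi / s / 2 :=
    measure_eq_zero_iff_ae_notMem.1 (Real.volume_singleton (a := Real.pi / s / 2))
  have key : ∀ᵐ x : ℝ, x ∈ Ioc 0 (Real.pi / s) →
      n * s ^ 2 * (g x ^ 2 * Real.sin (s * x) ^ (n - 1)) ≤
        deriv g x ^ 2 * Real.sin (s * x) ^ (n - 1)
          + s * deriv (fun x => r x * g x * Real.sin (s * x) ^ n) x := by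
    filter_upwards [hne, ae_uIoc_mem_Ioo hD, hg.ae_differentiableWithinAt_of_mem]
      with x hx hx2 hx3 hx4
    rw [uIoc_of_le hD] at hx2
    have hI := hx2 hx4
    have hgd := ((hx3 (Ioo_subset_Icc_self hI)).differentiableAt
      (Icc_mem_nhds hI.1 hI.2)).hasDerivAt
    have hsin := sin_mul_pos_of_mem_Ioo hs hI
    have hcx : c x ≠ 0 := by
      intro h
      have h3 : 2 / Real.pi * |Real.pi / 2 - s * x| ≤ |Real.sin (Real.pi / 2 - s * x)| := by
        have h4 : s * x < Real.pi := by
          have := hI.2; rw [lt_div_iff₀ hs] at this; linarith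
        have h5 := mul_pos hs hI.1
        exact Real.mul_abs_le_abs_sin (abs_le.2 ⟨by linarith, by linarith⟩)
      rw [Real.sin_pi_div_two_sub, show Real.cos (s * x) = 0 from h, abs_zero] at h3
      have h6 : |Real.pi / 2 - s * x| ≤ 0 := by
        by_contra! h7
        have : 0 < 2 / Real.pi * |Real.pi / 2 - s * x| := by positivity
        linarith
      have h7 : Real.pi / 2 - s * x = 0 := abs_nonpos_iff.1 h6
      apply hx
      field_simp
      linarith
    have hcd : HasDerivAt c (-(s * Real.sin (s * x))) x := by
      refine (((hasDerivAt_id x).const_mul s).cos).congr_deriv ?_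
      simp only [id, mul_one]; ring
    have hd := (((hgd.div hcd hcx).mul hgd).mul (hasDerivAt_sin_mul_rpow s x hn)).deriv
    have hd' : deriv (fun x => r x * g x * Real.sin (s * x) ^ n) x = _ := hd
    have hpow : Real.sin (s * x) ^ n = Real.sin (s * x) ^ (n - 1) * Real.sin (s * x) := by
      rw [← Real.rpow_add_one hsin.ne']; ring_nf
    have hw0 : 0 ≤ Real.sin (s * x) ^ (n - 1) := Real.rpow_nonneg hsin.le _
    have hfin : deriv g x ^ 2 * Real.sin (s * x) ^ (n - 1)
          + s * deriv (fun x => r x * g x * Real.sin (s * x) ^ n) x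
          - n * s ^ 2 * (g x ^ 2 * Real.sin (s * x) ^ (n - 1))
        = Real.sin (s * x) ^ (n - 1)
          * (deriv g x + s * (g x / c x) * Real.sin (s * x)) ^ 2 := by
      rw [hd', hpow]
      simp only [Pi.div_apply, Pi.mul_apply]
      rw [show Real.cos (s * x) = c x from rfl]
      field_simp
      ring
    have := mul_nonneg hw0 (sq_nonneg (deriv g x + s * (g x / c x) * Real.sin (s * x)))
    linarith
  have hmono : ∫ x in 0..Real.pi / s, n * s ^ 2 * (g x ^ 2 * Real.sin (s * x) ^ (n - 1)) ≤
      ∫ x in 0..Real.pi / s, (deriv g x ^ 2 * Real.sin (s * x) ^ (n - 1)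
          + s * deriv (fun x => r x * g x * Real.sin (s * x) ^ n) x) := by
    refine intervalIntegral.integral_mono_ae_restrict hD (i2.const_mul _) (i1.add (i3.const_mul s)) ?_
    rw [Filter.EventuallyLE, ae_restrict_iff' measurableSet_Icc]
    have hne0 : ∀ᵐ x : ℝ, x ≠ 0 :=
      measure_eq_zero_iff_ae_notMem.1 (Real.volume_singleton (a := 0))
    filter_upwards [key, hne0] with x hx h1 h2
    exact hx ⟨lt_of_le_of_ne h2.1 (Ne.symm h1), h2.2⟩
  rwa [intervalIntegral.integral_const_mul, intervalIntegral.integral_add i1 (i3.const_mul s),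
    intervalIntegral.integral_const_mul, hInt, mul_zero,
    add_zero] at hmono

theorem slopeOn_eq_abs_of_hasDerivAt {f : ℝ → ℝ} {I : Set ℝ} {x f' : ℝ} (hI : I ∈ 𝓝 x)
    (hf : HasDerivAt f f' x) : slopeOn f I x = |f'| := by
  have hn : 𝓝[I \ {x}] x = 𝓝[≠] x := by
    rw [sdiff_eq, inter_comm]
    exact nhdsWithin_inter_of_mem' (mem_nhdsWithin_of_mem_nhds hI)
  have ht := (hasDerivAt_iff_tendsto_slope.1 hf).abs
  rw [slopeOn, hn]
  refine Filter.Tendsto.limsup_eq (ht.congr fun y => ?_)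
  rw [slope_def_field, abs_div]

theorem LocLipschitzOn.locallyLipschitzOn {f : ℝ → ℝ} {I : Set ℝ} (hf : LocLipschitzOn f I) :
    LocallyLipschitzOn I f := by
  intro x hx
  obtain ⟨ε, hε, C, hC⟩ := hf x hx
  exact ⟨C, _, inter_mem_nhdsWithin I (Metric.ball_mem_nhds x hε), hC⟩

theorem LocallyLipschitz.locLipschitzOn {f : ℝ → ℝ} (hf : LocallyLipschitz f) (I : Set ℝ) :
    LocLipschitzOn f I := by
  intro x _
  obtain ⟨C, t, ht, hC⟩ := hf x
  obtain ⟨ε, hε, hb⟩ := Metric.mem_nhds_iff.1 ht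
  exact ⟨ε, hε, C, hC.mono (inter_subset_right.trans hb)⟩

theorem integral_sin_mul_rpow_pos {s n : ℝ} (hs : 0 < s) (hn : 1 < n) :
    0 < ∫ x in 0..Real.pi / s, Real.sin (s * x) ^ (n - 1) := by
  have hpi := Real.pi_pos
  exact intervalIntegral.intervalIntegral_pos_of_pos_on
    ((continuous_sin_mul_rpow s hn).intervalIntegrable _ _)
    (fun x hx => Real.rpow_pos_of_pos (sin_mul_pos_of_mem_Ioo hs hx) _) (by positivity)

theorem integral_sq_mul_le_of_integral_eq_zero {s n : ℝ} (hs : 0 < s) (hn : 1 < n) {f : ℝ → ℝ}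
    {C : ℝ≥0} (hf : LipschitzOnWith C f (Icc 0 (Real.pi / s)))
    (h0 : ∫ x in 0..Real.pi / s, f x * Real.sin (s * x) ^ (n - 1) = 0) :
    n * s ^ 2 * ∫ x in 0..Real.pi / s, f x ^ 2 * Real.sin (s * x) ^ (n - 1)
      ≤ ∫ x in 0..Real.pi / s, deriv f x ^ 2 * Real.sin (s * x) ^ (n - 1) := by
  have hpi := Real.pi_pos
  have hD : 0 ≤ Real.pi / s := by positivity
  set m := f (Real.pi / s / 2) with hm
  have hg : LipschitzOnWith C (fun x => f x - m) (Icc 0 (Real.pi / s)) := by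
    refine LipschitzOnWith.of_dist_le_mul fun x hx y hy => ?_
    simpa using hf.dist_le_mul x hx y hy
  have h := integral_sq_mul_le_of_midpoint_eq_zero hs hn hg (by simp [hm])
  simp only [deriv_sub_const_fun] at h
  refine le_trans (mul_le_mul_of_nonneg_left ?_ (by positivity)) h
  have hw := continuous_sin_mul_rpow s hn
  have hfw : IntervalIntegrable (fun x => f x * Real.sin (s * x) ^ (n - 1)) volume 0
      (Real.pi / s) := by
    refine ContinuousOn.intervalIntegrable ?_
    rw [uIcc_of_le hD]
    exact hf.continuousOn.mul hw.continuousOn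
  have hfw2 : IntervalIntegrable (fun x => f x ^ 2 * Real.sin (s * x) ^ (n - 1)) volume 0
      (Real.pi / s) := by
    refine ContinuousOn.intervalIntegrable ?_
    rw [uIcc_of_le hD]
    exact (hf.continuousOn.pow 2).mul hw.continuousOn
  have hwi := hw.intervalIntegrable (μ := volume) 0 (Real.pi / s)
  have e : ∀ x, (f x - m) ^ 2 * Real.sin (s * x) ^ (n - 1)
      = f x ^ 2 * Real.sin (s * x) ^ (n - 1) - 2 * m * (f x * Real.sin (s * x) ^ (n - 1))
        + m ^ 2 * Real.sin (s * x) ^ (n - 1) := fun x => by ring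
  simp only [e]
  rw [intervalIntegral.integral_add (hfw2.sub (hfw.const_mul _)) (hwi.const_mul _),
    intervalIntegral.integral_sub hfw2 (hfw.const_mul _), intervalIntegral.integral_const_mul,
    intervalIntegral.integral_const_mul, h0]
  have := mul_nonneg (sq_nonneg m) (integral_sin_mul_rpow_pos hs hn).le
  linarith

theorem integral_cos_mul_sin_rpow_eq_zero {s n : ℝ} (hs : 0 < s) (hn : 1 < n) :
    ∫ x in 0..Real.pi / s, Real.cos (s * x) * Real.sin (s * x) ^ (n - 1) = 0 := by
  have hw := continuous_sin_mul_rpow s hn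
  have hn0 : n ≠ 0 := by linarith
  have h := intervalIntegral.integral_eq_sub_of_hasDerivAt (a := 0) (b := Real.pi / s)
    (fun x _ => hasDerivAt_sin_mul_rpow (n := n) s x hn)
    (Continuous.intervalIntegrable (by fun_prop) _ _)
  have e1 : s * (Real.pi / s) = Real.pi := by field_simp
  simp only [e1, Real.sin_pi, mul_zero, Real.sin_zero, Real.zero_rpow hn0, sub_self,
    mul_assoc (n * s), intervalIntegral.integral_const_mul, mul_eq_zero, hn0, hs.ne',
    false_or] at h
  exact h

theorem integral_sq_deriv_cos_mul_sin_rpow {s n : ℝ} (hs : 0 < s) (hn : 1 < n) :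
    ∫ x in 0..Real.pi / s, deriv (fun x => Real.cos (s * x)) x ^ 2 * Real.sin (s * x) ^ (n - 1)
      = n * s ^ 2 * ∫ x in 0..Real.pi / s, Real.cos (s * x) ^ 2 * Real.sin (s * x) ^ (n - 1) := by
  have hpi := Real.pi_pos
  have hD : 0 ≤ Real.pi / s := by positivity
  have hw := continuous_sin_mul_rpow s hn
  have hn0 : n ≠ 0 := by linarith
  have hcd : ∀ x, HasDerivAt (fun x => Real.cos (s * x)) (-(s * Real.sin (s * x))) x := fun x => by
    refine (((hasDerivAt_id x).const_mul s).cos).congr_deriv ?_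
    simp only [id, mul_one]; ring
  have hwn : Continuous fun x => Real.sin (s * x) ^ n :=
    continuous_iff_continuousAt.2 fun x => (hasDerivAt_sin_mul_rpow s x hn).continuousAt
  have h := intervalIntegral.integral_eq_sub_of_hasDerivAt (a := 0) (b := Real.pi / s)
    (fun x _ => (hcd x).mul (hasDerivAt_sin_mul_rpow (n := n) s x hn))
    (Continuous.intervalIntegrable (by fun_prop) _ _)
  have e1 : s * (Real.pi / s) = Real.pi := by field_simp
  simp only [Pi.mul_apply, e1, Real.sin_pi, mul_zero, Real.sin_zero, Real.zero_rpow hn0,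
    sub_self] at h
  have i1 : IntervalIntegrable (fun x => deriv (fun x => Real.cos (s * x)) x ^ 2
      * Real.sin (s * x) ^ (n - 1)) volume 0 (Real.pi / s) := by
    simp only [(hcd _).deriv]
    exact Continuous.intervalIntegrable (by fun_prop) _ _
  have i2 : IntervalIntegrable (fun x => n * s ^ 2 * (Real.cos (s * x) ^ 2
      * Real.sin (s * x) ^ (n - 1))) volume 0 (Real.pi / s) :=
    Continuous.intervalIntegrable (by fun_prop) _ _
  rw [← intervalIntegral.integral_const_mul, ← sub_eq_zero, ← intervalIntegral.integral_sub i1 i2]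
  refine Eq.trans ?_ ((congrArg (-s * ·) h).trans (mul_zero (-s)))
  simp only [← intervalIntegral.integral_const_mul]
  refine intervalIntegral.integral_congr_ae ?_
  filter_upwards [ae_uIoc_mem_Ioo hD] with x hx hx2
  have hsin := sin_mul_pos_of_mem_Ioo hs (hx hx2)
  have hpow : Real.sin (s * x) ^ n = Real.sin (s * x) ^ (n - 1) * Real.sin (s * x) := by
    rw [← Real.rpow_add_one hsin.ne']; ring_nf
  rw [(hcd x).deriv, hpow]
  ring

theorem setIntegral_mul_eq_of_eq_indicator {h w F : ℝ → ℝ} {I : Set ℝ} {a D : ℝ} (hD : 0 ≤ D)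
    (hI : MeasurableSet I) (hDI : Icc 0 D ⊆ I)
    (hh : ∀ x ∈ I, h x = (Icc 0 D).indicator (fun x => a * w x) x) :
    ∫ x in I, F x * h x = a * ∫ x in 0..D, F x * w x := by
  have : ∫ x in I, F x * h x = ∫ x in I, (Icc 0 D).indicator (fun x => a * (F x * w x)) x := by
    refine setIntegral_congr_fun hI fun x hx => ?_
    by_cases hx' : x ∈ Icc 0 D
    · simp only [hh x hx, indicator_of_mem hx']; ring
    · simp only [hh x hx, indicator_of_notMem hx', mul_zero]
  rw [this, setIntegral_indicator measurableSet_Icc, inter_eq_self_of_subset_right hDI,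
    integral_Icc_eq_integral_Ioc, ← intervalIntegral.integral_of_le hD,
    intervalIntegral.integral_const_mul]

theorem integral_sq_slopeOn_mul {f w : ℝ → ℝ} {I : Set ℝ} {C : ℝ≥0} {D : ℝ} (hD : 0 ≤ D)
    (hDI : Icc 0 D ⊆ I) (hf : LipschitzOnWith C f (Icc 0 D)) :
    ∫ x in 0..D, slopeOn f I x ^ 2 * w x = ∫ x in 0..D, deriv f x ^ 2 * w x := by
  refine intervalIntegral.integral_congr_ae ?_
  filter_upwards [ae_uIoc_mem_Ioo hD, hf.ae_differentiableWithinAt_of_mem] with x hx hx2 hx3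
  have hI := hx hx3
  have hn := Icc_mem_nhds hI.1 hI.2
  rw [slopeOn_eq_abs_of_hasDerivAt (Filter.mem_of_superset hn hDI)
    ((hx2 (Ioo_subset_Icc_self hI)).differentiableAt hn).hasDerivAt, sq_abs]

theorem poincareConst_eq_of_eq_indicator_sin {s n a : ℝ} (hs : 0 < s) (hn : 1 < n) (ha : 0 < a)
    {h : ℝ → ℝ} {I : Set ℝ} (hI : MeasurableSet I) (hDI : Icc 0 (Real.pi / s) ⊆ I)
    (hh : ∀ x ∈ I, h x
      = (Icc 0 (Real.pi / s)).indicator (fun x => a * Real.sin (s * x) ^ (n - 1)) x) :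
    poincareConst h I = n * s ^ 2 := by
  have hpi := Real.pi_pos
  have hD : 0 ≤ Real.pi / s := by positivity
  have key : ∀ F : ℝ → ℝ, ∫ x in I, F x * h x
      = a * ∫ x in 0..Real.pi / s, F x * Real.sin (s * x) ^ (n - 1) :=
    fun F => setIntegral_mul_eq_of_eq_indicator hD hI hDI hh
  refine IsLeast.csInf_eq ⟨?_, ?_⟩
  · set c : ℝ → ℝ := fun x => Real.cos (s * x) with hc
    have hcl : LocallyLipschitz c := by
      have : ContDiff ℝ 1 c := by simp only [hc]; fun_prop
      exact this.locallyLipschitz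
    obtain ⟨C, hC⟩ := (hcl.locallyLipschitzOn
      (s := Icc 0 (Real.pi / s))).exists_lipschitzOnWith_of_compact isCompact_Icc
    have hw := continuous_sin_mul_rpow s hn
    have hcc : Continuous c := hcl.continuous
    have hpos : 0 < ∫ x in 0..Real.pi / s, c x ^ 2 * Real.sin (s * x) ^ (n - 1) := by
      have h1 := integral_sq_deriv_cos_mul_sin_rpow hs hn
      have h2 := integral_sin_mul_rpow_pos hs hn
      have h3 : ∫ x in 0..Real.pi / s, deriv c x ^ 2 * Real.sin (s * x) ^ (n - 1)
          = s ^ 2 * (∫ x in 0..Real.pi / s, Real.sin (s * x) ^ (n - 1))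
            - s ^ 2 * ∫ x in 0..Real.pi / s, c x ^ 2 * Real.sin (s * x) ^ (n - 1) := by
        rw [← intervalIntegral.integral_const_mul, ← intervalIntegral.integral_const_mul,
          ← intervalIntegral.integral_sub (Continuous.intervalIntegrable (by fun_prop) _ _)
            (Continuous.intervalIntegrable (by fun_prop) _ _)]
        refine intervalIntegral.integral_congr fun x _ => ?_
        have hcd : HasDerivAt c (-(s * Real.sin (s * x))) x := by
          refine (((hasDerivAt_id x).const_mul s).cos).congr_deriv ?_
          simp only [id, mul_one]; ring
        simp only [hcd.deriv]
        simp only [hc, Real.cos_sq']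
        ring
      have h4 : s ^ 2 * (∫ x in 0..Real.pi / s, Real.sin (s * x) ^ (n - 1))
          = (n * s ^ 2 + s ^ 2) *
            ∫ x in 0..Real.pi / s, c x ^ 2 * Real.sin (s * x) ^ (n - 1) := by
        rw [h1] at h3
        linarith
      have h5 : 0 < (n * s ^ 2 + s ^ 2) *
            ∫ x in 0..Real.pi / s, c x ^ 2 * Real.sin (s * x) ^ (n - 1) := by
        rw [← h4]; positivity
      exact pos_of_mul_pos_right h5 (by positivity)
    refine ⟨c, hcl.locLipschitzOn I, ?_, ?_, ?_, ?_⟩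
    · rw [key c, integral_cos_mul_sin_rpow_eq_zero hs hn, mul_zero]
    · rw [key fun x => c x ^ 2]
      positivity
    · have hInt : IntegrableOn (fun x => c x ^ 2 * (a * Real.sin (s * x) ^ (n - 1)))
          (Icc 0 (Real.pi / s)) :=
        Continuous.integrableOn_Icc (by fun_prop)
      have hIntI := (hInt.integrable_indicator measurableSet_Icc).integrableOn (s := I)
      refine hIntI.congr_fun (fun x hx => ?_) hI
      by_cases hx' : x ∈ Icc 0 (Real.pi / s)
      · simp only [hh x hx, indicator_of_mem hx']
      · simp only [hh x hx, indicator_of_notMem hx', mul_zero]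
    · rw [key fun x => c x ^ 2, key fun x => slopeOn c I x ^ 2, integral_sq_slopeOn_mul hD hDI hC,
        mul_div_mul_left _ _ ha.ne', integral_sq_deriv_cos_mul_sin_rpow hs hn,
        mul_div_assoc, div_self hpos.ne', mul_one]
  · rintro _ ⟨f, hf, h0, hpos, -, rfl⟩
    obtain ⟨C, hC⟩ := (hf.locallyLipschitzOn.mono hDI).exists_lipschitzOnWith_of_compact
      isCompact_Icc
    rw [key f, mul_eq_zero, or_iff_right ha.ne'] at h0
    rw [key fun x => f x ^ 2] at hpos ⊢
    rw [le_div_iff₀ hpos, key fun x => slopeOn f I x ^ 2, integral_sq_slopeOn_mul hD hDI hC,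
      mul_left_comm]
    exact mul_le_mul_of_nonneg_left (integral_sq_mul_le_of_integral_eq_zero hs hn hC h0) ha.le

theorem modelDensity_eq_indicator {K N : ℝ} (hK : 0 < K) (hN : 1 < N) (x : ℝ) :
    modelDensity K N (Real.pi / Real.sqrt (K / (N - 1))) x
      = (Icc 0 (Real.pi / Real.sqrt (K / (N - 1)))).indicator
        (fun x => ((Real.sqrt (K / (N - 1))) ^ (N - 1))⁻¹
          * Real.sin (Real.sqrt (K / (N - 1)) * x) ^ (N - 1)) x := by
  have hκ : 0 < K / (N - 1) := div_pos hK (by linarith)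
  have hs : 0 < Real.sqrt (K / (N - 1)) := Real.sqrt_pos.2 hκ
  have hD : 0 < Real.pi / Real.sqrt (K / (N - 1)) := div_pos Real.pi_pos hs
  simp only [modelDensity, sKappa, if_pos hκ]
  set s := Real.sqrt (K / (N - 1))
  have e : s * (Real.pi / s - x) = Real.pi - s * x := by field_simp
  rw [e, Real.sin_pi_sub]
  by_cases hx : x ∈ Icc 0 (Real.pi / s)
  · have hsin : 0 ≤ Real.sin (s * x) := by
      have := hx.2
      rw [le_div_iff₀ hs] at this
      exact Real.sin_nonneg_of_nonneg_of_le_pi (mul_nonneg hs.le hx.1) (by linarith)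
    rw [indicator_of_mem hx, Real.div_rpow hsin hs.le, div_eq_inv_mul (_ ^ _)]
    split_ifs with h1 h2
    · rfl
    · rfl
    · rcases le_total x (Real.pi / s / 2) with h | h
      · exact absurd ⟨hx.1, h⟩ h1
      · exact absurd ⟨h, hx.2⟩ h2
  · rw [indicator_of_notMem hx, if_neg, if_neg]
    · exact fun h => hx ⟨by linarith [h.1], h.2⟩
    · exact fun h => hx ⟨h.1, by linarith [h.2]⟩

end Poincare

/-- `λ[h_{K,N,D_{K,N}}] = N K /(N-1)` (Lemma 5.6). -/
theorem stmt_16 (K N : ℝ) (hK : 0 < K) (hN : 1 < N) :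
    poincareConst (modelDensity K N (Real.pi / Real.sqrt (K / (N - 1)))) Set.univ
        = N / (N - 1) * K ∧
    poincareConst (fun x => Real.sin (Real.sqrt (K / (N - 1)) * x) ^ (N - 1))
        (Set.Icc 0 (Real.pi / Real.sqrt (K / (N - 1))))
        = N / (N - 1) * K := by
  have hκ : 0 < K / (N - 1) := div_pos hK (by linarith)
  have hs : 0 < Real.sqrt (K / (N - 1)) := Real.sqrt_pos.2 hκ
  have e : N / (N - 1) * K = N * Real.sqrt (K / (N - 1)) ^ 2 := by
    rw [Real.sq_sqrt hκ.le]; ring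
  rw [e]
  constructor
  · exact poincareConst_eq_of_eq_indicator_sin hs hN (inv_pos.2 (Real.rpow_pos_of_pos hs _))
      MeasurableSet.univ (Set.subset_univ _) fun x _ => modelDensity_eq_indicator hK hN x
  · refine poincareConst_eq_of_eq_indicator_sin hs hN one_pos measurableSet_Icc subset_rfl
      fun x hx => ?_
    rw [Set.indicator_of_mem hx, one_mul]
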